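/- arXiv:2007.01672 — 4 statements merged into one kernel-verified Lean document; each statement's English description precedes it below -/
import Mathlib

section
/- For every p ≥ 2 and every θ ∈ ℝ^d, the Lyapunov function V_p satisfies the drift condition β^{-1} ΔV_p(θ) − ⟨h(θ), ∇V_p(θ)⟩ ≤ −(a p / 4) V_p(θ) + (3/4) a p (1 + M̄_p^2)^{(p+1)/2}, where M̄_p := sqrt( (4/3 + 4b/(3a) + 4d/(3aβ) + 4(p−2)/(3aβ) + 4E[K1(X_0)]/(3a))^2 − 1 ). -/
open MeasureTheory ProbabilityTheory Real
open scoped RealInnerProductSpace ENNReal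

noncomputable section

/-- The Laplacian of `f : ℝ^d → ℝ` at `x`, as the sum of second directional derivatives
along the coordinate directions. -/
def laplacian {d : ℕ} (f : EuclideanSpace ℝ (Fin d) → ℝ) (x : EuclideanSpace ℝ (Fin d)) : ℝ :=
  ∑ i : Fin d, iteratedDeriv 2 (fun t : ℝ => f (x + t • EuclideanSpace.single i (1 : ℝ))) 0

/-- The Lyapunov function `V_p(θ) = (1+|θ|²)^{p/2}`. -/
def lyapunovV {d : ℕ} (p : ℝ) (θ : EuclideanSpace ℝ (Fin d)) : ℝ := (1 + ‖θ‖ ^ 2) ^ (p / 2)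

/-!
With `s = (1 + ‖θ‖²)^{1/2}` every term is a power of `s`: `V_p = s^p`, `∇V_p = p s^{p-2} θ` and
`ΔV_p ≤ p (d + p - 2) s^{p-2}`. Averaging dissipativity gives
`⟨h θ, θ⟩ ≥ a ‖θ‖² - b - κ ‖θ‖` with `κ = E[K1(X_0)]`, so the left-hand side is at most
`p s^{p-2}` times a quadratic in `s` with leading term `-a s²`. The quadratic is at most
`a s (3/4 C - s)`, where `C² = 1 + M̄_p²`. Splitting `s^p` as `s^p / 4 + 3 s^p / 4` leaves the
remainder `3/4 a p s^{p-1} (C - s)`, which is negative for `s > C` and at most `3/4 a p C^p`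
otherwise.
-/

section LinesThroughPoint

variable {E : Type*} [NormedAddCommGroup E] [InnerProductSpace ℝ E]

lemma hasDerivAt_one_add_norm_add_smul_sq (x v : E) (t : ℝ) :
    HasDerivAt (fun t : ℝ ↦ 1 + ‖x + t • v‖ ^ 2) (2 * ⟪x + t • v, v⟫) t := by
  have hline : HasDerivAt (fun t : ℝ ↦ x + t • v) v t := by
    simpa using ((hasDerivAt_id t).smul_const v).const_add x
  exact hline.norm_sq.const_add 1

lemma hasDerivAt_one_add_norm_add_smul_sq_rpow (x v : E) (q t : ℝ) :
    HasDerivAt (fun t : ℝ ↦ (1 + ‖x + t • v‖ ^ 2) ^ q)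
      (2 * ⟪x + t • v, v⟫ * q * (1 + ‖x + t • v‖ ^ 2) ^ (q - 1)) t :=
  (hasDerivAt_one_add_norm_add_smul_sq x v t).rpow_const (.inl (by positivity))

lemma iteratedDeriv_two_one_add_norm_add_smul_sq_rpow (x v : E) (q : ℝ) :
    iteratedDeriv 2 (fun t : ℝ ↦ (1 + ‖x + t • v‖ ^ 2) ^ q) 0 =
      2 * q * ((1 + ‖x‖ ^ 2) ^ (q - 1) * ‖v‖ ^ 2
        + 2 * (q - 1) * (1 + ‖x‖ ^ 2) ^ (q - 2) * ⟪x, v⟫ ^ 2) := by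
  have hderiv : deriv (fun t : ℝ ↦ (1 + ‖x + t • v‖ ^ 2) ^ q) =
      fun t ↦ 2 * ⟪x + t • v, v⟫ * q * (1 + ‖x + t • v‖ ^ 2) ^ (q - 1) :=
    funext fun t ↦ (hasDerivAt_one_add_norm_add_smul_sq_rpow x v q t).deriv
  have hinner : HasDerivAt (fun t : ℝ ↦ ⟪x + t • v, v⟫) (‖v‖ ^ 2) 0 := by
    have haffine : (fun t : ℝ ↦ ⟪x + t • v, v⟫) = fun t ↦ ⟪x, v⟫ + t * ‖v‖ ^ 2 := by
      funext t
      rw [inner_add_left, real_inner_smul_left, real_inner_self_eq_norm_sq]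
    rw [haffine]
    simpa using ((hasDerivAt_id (0 : ℝ)).mul_const (‖v‖ ^ 2)).const_add ⟪x, v⟫
  have hsecond := ((hinner.const_mul 2).mul_const q).mul
    (hasDerivAt_one_add_norm_add_smul_sq_rpow x v (q - 1) 0)
  rw [iteratedDeriv_succ, iteratedDeriv_one, hderiv]
  refine hsecond.deriv.trans ?_
  rw [zero_smul, add_zero, show q - 1 - 1 = q - 2 by ring]
  ring

end LinesThroughPoint

lemma hasGradientAt_one_add_norm_sq_rpow {E : Type*} [NormedAddCommGroup E]
    [InnerProductSpace ℝ E] [CompleteSpace E] (q : ℝ) (x : E) :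
    HasGradientAt (fun y : E ↦ (1 + ‖y‖ ^ 2) ^ q) ((2 * q * (1 + ‖x‖ ^ 2) ^ (q - 1)) • x) x := by
  rw [hasGradientAt_iff_hasFDerivAt]
  refine (((hasStrictFDerivAt_norm_sq x).hasFDerivAt.const_add 1).rpow_const (p := q)
    (.inl (by positivity))).congr_fderiv ?_
  ext y
  simp only [map_smul, smul_apply, InnerProductSpace.toDual_apply_apply,
    innerSL_apply_apply, smul_eq_mul, nsmul_eq_mul, Nat.cast_ofNat]
  ring

section Lyapunov

variable {d : ℕ} (p q : ℝ) (θ : EuclideanSpace ℝ (Fin d))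

lemma lyapunovV_pos : 0 < lyapunovV p θ := by
  unfold lyapunovV
  positivity

lemma lyapunovV_two : lyapunovV 2 θ = 1 + ‖θ‖ ^ 2 := by
  rw [lyapunovV, div_self two_ne_zero, rpow_one]

lemma lyapunovV_add : lyapunovV (p + q) θ = lyapunovV p θ * lyapunovV q θ := by
  rw [lyapunovV, add_div, rpow_add (by positivity), lyapunovV, lyapunovV]

lemma lyapunovV_eq_lyapunovV_one_rpow : lyapunovV p θ = lyapunovV 1 θ ^ p := by
  rw [lyapunovV, lyapunovV, ← rpow_mul (by positivity), one_div_mul_eq_div]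

lemma lyapunovV_one_sq : lyapunovV 1 θ ^ 2 = 1 + ‖θ‖ ^ 2 := by
  rw [← rpow_two, ← lyapunovV_eq_lyapunovV_one_rpow, lyapunovV_two]

lemma one_le_lyapunovV_one : 1 ≤ lyapunovV 1 θ :=
  one_le_rpow (le_add_of_nonneg_right (sq_nonneg _)) (by norm_num)

lemma norm_le_lyapunovV_one : ‖θ‖ ≤ lyapunovV 1 θ :=
  (abs_le_of_sq_le_sq' (by linarith [lyapunovV_one_sq θ]) (lyapunovV_pos 1 θ).le).2

lemma gradient_lyapunovV : gradient (lyapunovV p) θ = (p * lyapunovV (p - 2) θ) • θ := by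
  refine (hasGradientAt_one_add_norm_sq_rpow (p / 2) θ).gradient.trans ?_
  rw [lyapunovV, mul_div_cancel₀ p two_ne_zero, sub_div, div_self two_ne_zero]

lemma laplacian_lyapunovV :
    laplacian (lyapunovV p) θ =
      p * (d * lyapunovV (p - 2) θ + (p - 2) * (‖θ‖ ^ 2 * lyapunovV (p - 4) θ)) := by
  have hdirection (i : Fin d) :
      iteratedDeriv 2 (fun t : ℝ ↦ lyapunovV p (θ + t • EuclideanSpace.single i (1 : ℝ))) 0 =
        p * (lyapunovV (p - 2) θ + (p - 2) * lyapunovV (p - 4) θ * θ i ^ 2) := by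
    refine (iteratedDeriv_two_one_add_norm_add_smul_sq_rpow _ _ _).trans ?_
    simp only [lyapunovV, PiLp.norm_single, EuclideanSpace.inner_single_right, norm_one,
      one_pow, one_mul, mul_one, conj_trivial]
    rw [show (p - 2) / 2 = p / 2 - 1 by ring, show (p - 4) / 2 = p / 2 - 2 by ring]
    ring
  rw [laplacian, Finset.sum_congr rfl fun i _ ↦ hdirection i, ← Finset.mul_sum,
    Finset.sum_add_distrib, ← Finset.mul_sum, ← EuclideanSpace.real_norm_sq_eq, Finset.sum_const,
    Finset.card_univ, Fintype.card_fin, nsmul_eq_mul]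
  ring

variable {p}

lemma laplacian_lyapunovV_le (hp : 2 ≤ p) :
    laplacian (lyapunovV p) θ ≤ p * (d + (p - 2)) * lyapunovV (p - 2) θ := by
  have hsq : ‖θ‖ ^ 2 * lyapunovV (p - 4) θ ≤ lyapunovV (p - 2) θ := by
    rw [show p - 2 = 2 + (p - 4) by ring, lyapunovV_add, lyapunovV_two]
    gcongr
    · exact (lyapunovV_pos _ θ).le
    · exact le_add_of_nonneg_left zero_le_one
  have : 0 ≤ p - 2 := sub_nonneg.mpr hp
  calc laplacian (lyapunovV p) θ
      = p * (d * lyapunovV (p - 2) θ + (p - 2) * (‖θ‖ ^ 2 * lyapunovV (p - 4) θ)) :=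
        laplacian_lyapunovV p θ
    _ ≤ p * (d * lyapunovV (p - 2) θ + (p - 2) * lyapunovV (p - 2) θ) := by gcongr
    _ = p * (d + (p - 2)) * lyapunovV (p - 2) θ := by ring

end Lyapunov

lemma rpow_sub_one_mul_sub_le_rpow {s C p : ℝ} (hs : 0 ≤ s) (hC : 0 < C) (hp : 1 ≤ p) :
    s ^ (p - 1) * (C - s) ≤ C ^ p := by
  rcases le_total s C with hsC | hCs
  · calc s ^ (p - 1) * (C - s) ≤ C ^ (p - 1) * C := by
          gcongr
          linarith
      _ = C ^ p := by rw [← rpow_add_one hC.ne', sub_add_cancel]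
  · exact (mul_nonpos_of_nonneg_of_nonpos (rpow_nonneg hs _) (sub_nonpos.mpr hCs)).trans
      (rpow_nonneg hC.le _)

lemma one_add_sqrt_sq_sub_one_sq_rpow_half {C : ℝ} (hC : 1 ≤ C) (p : ℝ) :
    (1 + √(C ^ 2 - 1) ^ 2) ^ (p / 2) = C ^ p := by
  rw [sq_sqrt (sub_nonneg.mpr (one_le_pow₀ hC)), add_sub_cancel, ← rpow_two,
    ← rpow_mul (by linarith), mul_div_cancel₀ p two_ne_zero]

/-- The constant `C = (1 + M̄_p²)^{1/2}` of the paper: the drift is at most `-(ap/4) V_p` as soon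
as `(1 + ‖θ‖²)^{1/2} ≥ C`. The arguments `κ` and `n` stand for `E[K1(X_0)]` and the dimension. -/
def driftThreshold (a b κ β n p : ℝ) : ℝ :=
  4 / 3 + 4 * b / (3 * a) + 4 * n / (3 * a * β) + 4 * (p - 2) / (3 * a * β) + 4 * κ / (3 * a)

section Drift

variable {a b κ β n p : ℝ}

lemma one_le_driftThreshold (ha : 0 < a) (hb : 0 ≤ b) (hκ : 0 ≤ κ) (hβ : 0 < β) (hn : 0 ≤ n)
    (hp : 2 ≤ p) : 1 ≤ driftThreshold a b κ β n p := by
  have : 0 ≤ p - 2 := sub_nonneg.mpr hp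
  have hrest : 0 ≤ 4 * b / (3 * a) + 4 * n / (3 * a * β) + 4 * (p - 2) / (3 * a * β)
      + 4 * κ / (3 * a) := by positivity
  unfold driftThreshold
  linarith

lemma mul_driftThreshold (ha : a ≠ 0) (hβ : β ≠ 0) :
    3 / 4 * a * driftThreshold a b κ β n p = a + b + β⁻¹ * (n + (p - 2)) + κ := by
  unfold driftThreshold
  field_simp
  ring

/-- The bracket left after factoring `p (1 + r²)^{(p-2)/2}` out of the drift. -/
lemma radial_drift_le (ha : 0 < a) (hb : 0 ≤ b) (hκ : 0 ≤ κ) (hβ : 0 < β) (hn : 0 ≤ n)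
    (hp : 2 ≤ p) {r s : ℝ} (hs : 1 ≤ s) (hrs : r ≤ s) (hsq : s ^ 2 = 1 + r ^ 2) :
    β⁻¹ * (n + (p - 2)) - (a * r ^ 2 - b - κ * r) ≤
      a * s * (3 / 4 * driftThreshold a b κ β n p - s) := by
  have : 0 ≤ p - 2 := sub_nonneg.mpr hp
  calc β⁻¹ * (n + (p - 2)) - (a * r ^ 2 - b - κ * r)
      = (a + b + β⁻¹ * (n + (p - 2))) * 1 + κ * r - a * s ^ 2 := by rw [hsq]; ring
    _ ≤ (a + b + β⁻¹ * (n + (p - 2))) * s + κ * s - a * s ^ 2 := by gcongr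
    _ = a * s * (3 / 4 * driftThreshold a b κ β n p - s) := by
      linear_combination (-s) * mul_driftThreshold (b := b) (κ := κ) (n := n) (p := p) ha.ne' hβ.ne'

variable {d : ℕ} {θ v : EuclideanSpace ℝ (Fin d)}

lemma drift_lyapunovV_le_of_le_inner (ha : 0 < a) (hb : 0 ≤ b) (hκ : 0 ≤ κ) (hβ : 0 < β)
    (hp : 2 ≤ p) (hv : a * ‖θ‖ ^ 2 - b - κ * ‖θ‖ ≤ ⟪v, θ⟫) :
    β⁻¹ * laplacian (lyapunovV p) θ - ⟪v, gradient (lyapunovV p) θ⟫ ≤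
      -(a * p / 4) * lyapunovV p θ + 3 / 4 * a * p * driftThreshold a b κ β d p ^ p := by
  set C := driftThreshold a b κ β d p
  have hC : 0 < C := one_pos.trans_le (one_le_driftThreshold ha hb hκ hβ d.cast_nonneg hp)
  have hV : 0 < lyapunovV (p - 2) θ := lyapunovV_pos _ θ
  have hVsub_one : lyapunovV (p - 1) θ = lyapunovV (p - 2) θ * lyapunovV 1 θ := by
    rw [← lyapunovV_add]; ring_nf
  have hVp : lyapunovV p θ = lyapunovV (p - 1) θ * lyapunovV 1 θ := by
    rw [← lyapunovV_add, sub_add_cancel]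
  have hremainder : lyapunovV (p - 1) θ * (C - lyapunovV 1 θ) ≤ C ^ p := by
    rw [lyapunovV_eq_lyapunovV_one_rpow (p - 1)]
    exact rpow_sub_one_mul_sub_le_rpow (lyapunovV_pos 1 θ).le hC (by linarith)
  calc β⁻¹ * laplacian (lyapunovV p) θ - ⟪v, gradient (lyapunovV p) θ⟫
      = β⁻¹ * laplacian (lyapunovV p) θ - p * lyapunovV (p - 2) θ * ⟪v, θ⟫ := by
        rw [gradient_lyapunovV, inner_smul_right]
    _ ≤ β⁻¹ * (p * (d + (p - 2)) * lyapunovV (p - 2) θ)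
          - p * lyapunovV (p - 2) θ * (a * ‖θ‖ ^ 2 - b - κ * ‖θ‖) := by
        gcongr
        exact laplacian_lyapunovV_le θ hp
    _ = p * lyapunovV (p - 2) θ * (β⁻¹ * (d + (p - 2)) - (a * ‖θ‖ ^ 2 - b - κ * ‖θ‖)) := by ring
    _ ≤ p * lyapunovV (p - 2) θ * (a * lyapunovV 1 θ * (3 / 4 * C - lyapunovV 1 θ)) := by
        gcongr
        exact radial_drift_le ha hb hκ hβ d.cast_nonneg hp (one_le_lyapunovV_one θ)
          (norm_le_lyapunovV_one θ) (lyapunovV_one_sq θ)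
    _ = -(a * p / 4) * lyapunovV p θ
          + 3 / 4 * a * p * (lyapunovV (p - 1) θ * (C - lyapunovV 1 θ)) := by
        rw [hVp, hVsub_one]; ring
    _ ≤ -(a * p / 4) * lyapunovV p θ + 3 / 4 * a * p * C ^ p := by gcongr

end Drift

lemma sub_mul_norm_le_inner_add {E : Type*} [NormedAddCommGroup E] [InnerProductSpace ℝ E]
    {x y z : E} {c k : ℝ} (hx : c ≤ ⟪x, z⟫) (hy : ‖y‖ ≤ k) : c - k * ‖z‖ ≤ ⟪x + y, z⟫ := by
  have hyz : -(k * ‖z‖) ≤ ⟪y, z⟫ :=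
    neg_le_of_abs_le ((abs_real_inner_le_norm y z).trans (by gcongr))
  rw [inner_add_left]
  linarith

section Integration

variable {Ω : Type*} [MeasurableSpace Ω] {μ : Measure Ω}

lemma le_inner_integral_of_ae_le_inner {E : Type*} [NormedAddCommGroup E] [InnerProductSpace ℝ E]
    [CompleteSpace E] {f : Ω → E} {q B K : Ω → ℝ} {z : E} (hf : Integrable f μ)
    (hq : Integrable q μ) (hB : Integrable B μ) (hK : Integrable K μ)
    (hle : ∀ᵐ ω ∂μ, q ω - B ω - K ω * ‖z‖ ≤ ⟪f ω, z⟫) :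
    ∫ ω, q ω ∂μ - ∫ ω, B ω ∂μ - (∫ ω, K ω ∂μ) * ‖z‖ ≤ ⟪∫ ω, f ω ∂μ, z⟫ :=
  calc ∫ ω, q ω ∂μ - ∫ ω, B ω ∂μ - (∫ ω, K ω ∂μ) * ‖z‖
      = ∫ ω, (q ω - B ω - K ω * ‖z‖) ∂μ := by
        rw [integral_sub (by fun_prop) (by fun_prop), integral_sub hq hB, integral_mul_const]
    _ ≤ ∫ ω, ⟪f ω, z⟫ ∂μ :=
        integral_mono_ae ((hq.sub hB).sub (hK.mul_const _)) (hf.inner_const z) hle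
    _ = ⟪∫ ω, f ω ∂μ, z⟫ := by
        simp_rw [real_inner_comm z]
        exact integral_inner hf z

lemma integrable_of_integrable_pow [IsFiniteMeasure μ] {f : Ω → ℝ} {n : ℕ} (hn : n ≠ 0)
    (hf : 0 ≤ᵐ[μ] f) (hfn : Integrable (fun ω ↦ f ω ^ n) μ) : Integrable f μ := by
  have hmeas : AEStronglyMeasurable f μ :=
    (hfn.aemeasurable.pow_const (n⁻¹ : ℝ)).aestronglyMeasurable.congr <| by
      filter_upwards [hf] with ω hω using pow_rpow_inv_natCast hω hn
  refine ((integrable_const 1).add hfn).mono' hmeas ?_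
  filter_upwards [hf] with ω hω
  rw [norm_of_nonneg hω]
  change f ω ≤ 1 + f ω ^ n
  rcases le_total (f ω) 1 with hle | hge
  · exact hle.trans (le_add_of_nonneg_right (pow_nonneg hω n))
  · exact (le_self_pow₀ hge hn).trans (le_add_of_nonneg_left zero_le_one)

/-- A nonintegrable function has integral `0`, which the lower bound excludes unless `z = 0`. -/
lemma integrable_inner_of_mul_norm_sq_le_integral {E : Type*} [NormedAddCommGroup E]
    [InnerProductSpace ℝ E] {T : Ω → E} {a : ℝ} (ha : 0 < a) {z : E}
    (hle : a * ‖z‖ ^ 2 ≤ ∫ ω, ⟪z, T ω⟫ ∂μ) : Integrable (fun ω ↦ ⟪z, T ω⟫) μ := by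
  rcases eq_or_ne z 0 with rfl | hz
  · exact (integrable_zero Ω ℝ μ).congr (.of_forall fun ω ↦ (inner_zero_left (T ω)).symm)
  · have hpos : 0 < a * ‖z‖ ^ 2 := by positivity
    exact .of_integral_ne_zero (hpos.trans_le hle).ne'

theorem langevin_drift_condition_general {d : ℕ}
    {H : EuclideanSpace ℝ (Fin d) → Ω → EuclideanSpace ℝ (Fin d)}
    {q : EuclideanSpace ℝ (Fin d) → Ω → ℝ} {B K : Ω → ℝ} {a β p : ℝ} (ha : 0 < a) (hβ : 0 < β)
    (hp : 2 ≤ p) (hH : ∀ θ, Integrable (H θ) μ) (hq : ∀ θ, Integrable (q θ) μ)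
    (hB : Integrable B μ) (hK : Integrable K μ) (hB0 : 0 ≤ ∫ ω, B ω ∂μ) (hK0 : 0 ≤ ∫ ω, K ω ∂μ)
    (hdissip : ∀ θ, ∀ᵐ ω ∂μ, q θ ω - B ω - K ω * ‖θ‖ ≤ ⟪H θ ω, θ⟫)
    (hcoercive : ∀ θ, a * ‖θ‖ ^ 2 ≤ ∫ ω, q θ ω ∂μ) (θ : EuclideanSpace ℝ (Fin d)) :
    β⁻¹ * laplacian (lyapunovV p) θ - ⟪∫ ω, H θ ω ∂μ, gradient (lyapunovV p) θ⟫ ≤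
      -(a * p / 4) * lyapunovV p θ
        + 3 / 4 * a * p * driftThreshold a (∫ ω, B ω ∂μ) (∫ ω, K ω ∂μ) β d p ^ p := by
  refine drift_lyapunovV_le_of_le_inner ha hB0 hK0 hβ hp ?_
  calc a * ‖θ‖ ^ 2 - ∫ ω, B ω ∂μ - (∫ ω, K ω ∂μ) * ‖θ‖
      ≤ ∫ ω, q θ ω ∂μ - ∫ ω, B ω ∂μ - (∫ ω, K ω ∂μ) * ‖θ‖ := by
        gcongr
        exact hcoercive θ
    _ ≤ ⟪∫ ω, H θ ω ∂μ, θ⟫ :=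
        le_inner_integral_of_ae_le_inner (hH θ) (hq θ) hB hK (hdissip θ)

end Integration

/-- Drift condition for the Langevin SDE: for every `p ≥ 2` and `θ ∈ ℝ^d`,
`β⁻¹ ΔV_p(θ) − ⟨h(θ), ∇V_p(θ)⟩ ≤ −(ap/4) V_p(θ) + (3/4) a p (1 + M̄_p²)^{(p+1)/2}`. -/
theorem langevin_drift_condition {d m : ℕ} (hd : 1 ≤ d) (hm : 1 ≤ m)
    {Ω : Type} [MeasurableSpace Ω] (μ : Measure Ω) [IsProbabilityMeasure μ]
    (H F G : EuclideanSpace ℝ (Fin d) → EuclideanSpace ℝ (Fin m) → EuclideanSpace ℝ (Fin d))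
    (K1 : EuclideanSpace ℝ (Fin m) → ℝ) (hK1 : ∀ x, 0 ≤ K1 x)
    (L1 L2 ρ : ℝ) (hL1 : 0 < L1) (hL2 : 0 < L2) (hρ : 0 ≤ ρ)
    (hdecomp : ∀ θ x, H θ x = F θ x + G θ x)
    (hFLip : ∀ θ θ' x x', ‖F θ x - F θ' x'‖ ≤
      (1 + ‖x‖ + ‖x'‖) ^ ρ * (L1 * ‖θ - θ'‖ + L2 * ‖x - x'‖))
    (hGbdd : ∀ θ x, ‖G θ x‖ ≤ K1 x)
    (X0 : Ω → EuclideanSpace ℝ (Fin m)) (hX0 : Measurable X0)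
    (hXmom : Integrable (fun ω => ‖X0 ω‖ ^ (4 * ρ + 4)) μ)
    (hK1mom : Integrable (fun ω => (K1 (X0 ω)) ^ (4 : ℕ)) μ)
    (hHint : ∀ θ, Integrable (fun ω => H θ (X0 ω)) μ)
    (h : EuclideanSpace ℝ (Fin d) → EuclideanSpace ℝ (Fin d))
    (hdef : ∀ θ, h θ = ∫ ω, H θ (X0 ω) ∂μ)
    (A : EuclideanSpace ℝ (Fin m) → (EuclideanSpace ℝ (Fin d) →ₗ[ℝ] EuclideanSpace ℝ (Fin d)))
    (bfun : EuclideanSpace ℝ (Fin m) → ℝ)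
    (hApsd : ∀ x y, 0 ≤ ⟪y, A x y⟫)
    (hdissip : ∀ θ x, ⟪θ, A x θ⟫ - bfun x ≤ ⟪F θ x, θ⟫)
    (a : ℝ) (ha : 0 < a)
    (haeig : ∀ y : EuclideanSpace ℝ (Fin d), a * ‖y‖ ^ 2 ≤ ∫ ω, ⟪y, A (X0 ω) y⟫ ∂μ)
    (b : ℝ) (hbpos : 0 < b) (hbval : (∫ ω, bfun (X0 ω) ∂μ) = b)
    (β : ℝ) (hβ : 0 < β)
    (p : ℝ) (hp : 2 ≤ p)
    (Mp : ℝ)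
    (hMp : Mp = Real.sqrt ((4/3 + 4 * b / (3 * a) + 4 * (d : ℝ) / (3 * a * β)
        + 4 * (p - 2) / (3 * a * β) + 4 * (∫ ω, K1 (X0 ω) ∂μ) / (3 * a)) ^ 2 - 1)) :
    ∀ θ : EuclideanSpace ℝ (Fin d),
      β⁻¹ * laplacian (lyapunovV p) θ - ⟪h θ, gradient (lyapunovV p) θ⟫ ≤
        -(a * p / 4) * lyapunovV p θ + (3/4) * a * p * (1 + Mp ^ 2) ^ ((p + 1) / 2) := by
  intro θ
  have hκ : 0 ≤ ∫ ω, K1 (X0 ω) ∂μ := integral_nonneg fun ω ↦ hK1 (X0 ω)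
  have hC := one_le_driftThreshold ha hbpos.le hκ hβ d.cast_nonneg hp
  have hdrift := langevin_drift_condition_general ha hβ hp hHint
    (fun θ ↦ integrable_inner_of_mul_norm_sq_le_integral ha (haeig θ))
    (.of_integral_ne_zero (hbval.trans_ne hbpos.ne'))
    (integrable_of_integrable_pow four_ne_zero (.of_forall fun ω ↦ hK1 (X0 ω)) hK1mom)
    (hbval ▸ hbpos.le) hκ
    (fun θ ↦ .of_forall fun ω ↦ hdecomp θ (X0 ω) ▸
      sub_mul_norm_le_inner_add (hdissip θ (X0 ω)) (hGbdd θ (X0 ω))) haeig θ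
  rw [← hdef, hbval] at hdrift
  refine hdrift.trans ?_
  rw [hMp, ← driftThreshold, one_add_sqrt_sq_sub_one_sq_rpow_half hC]
  gcongr
  exact le_add_of_nonneg_right zero_le_one
end
end

section
/- If F is Lipschitz in the stated joint sense and satisfies the convexity condition with matrix Â1(x), then for every ε > 0, every θ ∈ ℝ^d and x ∈ ℝ^m, ⟨F(θ,x), θ⟩ ≥ ⟨θ, (Â1(x) − ε I_d) θ⟩ − (L2(1+|x|)^{ρ+1} + |F(0,0)|)^2 / (4ε). That is, F satisfies the dissipativity condition with A(x) = Â1(x) − ε I_d and b(x) = (L2(1+|x|)^{ρ+1} + |F(0,0)|)^2/(4ε). -/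
open MeasureTheory Real
open scoped RealInnerProductSpace

/-!
Testing the convexity condition against `θ' = 0` gives
`⟪F θ x, θ⟫ ≥ ⟪θ, Â₁(x) θ⟫ + ⟪F 0 x, θ⟫`. The last term is linear in `θ`, with a coefficient that
the Lipschitz condition between `x` and `0` bounds by `b = L2 (1 + ‖x‖)^(ρ + 1) + ‖F 0 0‖`. Young's
inequality `b ‖θ‖ ≤ ε ‖θ‖² + b² / (4ε)` absorbs it into the quadratic form.
-/

theorem mul_le_mul_sq_add_sq_div_four_mul {𝕜 : Type*} [Field 𝕜] [LinearOrder 𝕜]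
    [IsStrictOrderedRing 𝕜] {ε : 𝕜} (hε : 0 < ε) (a b : 𝕜) :
    a * b ≤ ε * b ^ 2 + a ^ 2 / (4 * ε) :=
  calc a * b = 2 * b * (a / 2) := by ring
    _ ≤ ε * b ^ 2 + ε⁻¹ * (a / 2) ^ 2 := two_mul_le_add_mul_sq hε
    _ = ε * b ^ 2 + a ^ 2 / (4 * ε) := by field_simp; ring

section Dissipativity

variable {E H : Type*} [SeminormedAddCommGroup E] [SeminormedAddCommGroup H]

theorem norm_le_mul_rpow_add_norm_zero {f : E → H} {L ρ : ℝ} (hL : 0 ≤ L) {x : E}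
    (hf : ‖f x - f 0‖ ≤ (1 + ‖x‖) ^ ρ * (L * ‖x‖)) :
    ‖f x‖ ≤ L * (1 + ‖x‖) ^ (ρ + 1) + ‖f 0‖ := by
  have hx : 0 < 1 + ‖x‖ := by positivity
  calc ‖f x‖ ≤ ‖f x - f 0‖ + ‖f 0‖ := norm_le_norm_sub_add _ _
    _ ≤ (1 + ‖x‖) ^ ρ * (L * ‖x‖) + ‖f 0‖ := by gcongr
    _ ≤ (1 + ‖x‖) ^ ρ * (L * (1 + ‖x‖)) + ‖f 0‖ := by
        gcongr
        exact le_add_of_nonneg_left zero_le_one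
    _ = L * (1 + ‖x‖) ^ (ρ + 1) + ‖f 0‖ := by rw [rpow_add_one hx.ne']; ring

variable [InnerProductSpace ℝ H]

theorem neg_mul_norm_sq_sub_sq_div_le_inner {v : H} {b ε : ℝ} (hv : ‖v‖ ≤ b) (hε : 0 < ε) (θ : H) :
    -(ε * ‖θ‖ ^ 2) - b ^ 2 / (4 * ε) ≤ ⟪v, θ⟫ := by
  have cauchy_schwarz : -(‖v‖ * ‖θ‖) ≤ ⟪v, θ⟫ := neg_le_of_abs_le (abs_real_inner_le_norm v θ)
  have norm_bound : ‖v‖ * ‖θ‖ ≤ b * ‖θ‖ := by gcongr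
  have young : b * ‖θ‖ ≤ ε * ‖θ‖ ^ 2 + b ^ 2 / (4 * ε) :=
    mul_le_mul_sq_add_sq_div_four_mul hε b ‖θ‖
  linarith

theorem inner_sub_smul_id_sub_sq_div_le_inner {f : H → H} {T : H →ₗ[ℝ] H} {b ε : ℝ} {θ : H}
    (hT : ⟪θ, T θ⟫ ≤ ⟪f θ - f 0, θ⟫) (hb : ‖f 0‖ ≤ b) (hε : 0 < ε) :
    ⟪θ, (T - ε • (LinearMap.id : H →ₗ[ℝ] H)) θ⟫ - b ^ 2 / (4 * ε) ≤ ⟪f θ, θ⟫ :=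
  calc ⟪θ, (T - ε • (LinearMap.id : H →ₗ[ℝ] H)) θ⟫ - b ^ 2 / (4 * ε)
      = ⟪θ, T θ⟫ + (-(ε * ‖θ‖ ^ 2) - b ^ 2 / (4 * ε)) := by
        simp only [LinearMap.sub_apply, LinearMap.smul_apply, LinearMap.id_apply, inner_sub_right,
          real_inner_smul_right, real_inner_self_eq_norm_sq]
        ring
    _ ≤ ⟪f θ - f 0, θ⟫ + ⟪f 0, θ⟫ :=
        add_le_add hT (neg_mul_norm_sq_sub_sq_div_le_inner hb hε θ)
    _ = ⟪f θ, θ⟫ := by rw [← inner_add_left, sub_add_cancel]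

theorem dissipativity_of_convexity_general (F : H → E → H) {L ρ : ℝ} (hL : 0 ≤ L)
    (hF : ∀ x, ‖F 0 x - F 0 0‖ ≤ (1 + ‖x‖) ^ ρ * (L * ‖x‖)) (A : E → H →ₗ[ℝ] H)
    (hA : ∀ θ x, ⟪θ, A x θ⟫ ≤ ⟪F θ x - F 0 x, θ⟫) {ε : ℝ} (hε : 0 < ε) (θ : H) (x : E) :
    ⟪θ, (A x - ε • (LinearMap.id : H →ₗ[ℝ] H)) θ⟫
        - (L * (1 + ‖x‖) ^ (ρ + 1) + ‖F 0 0‖) ^ 2 / (4 * ε) ≤ ⟪F θ x, θ⟫ :=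
  have growth : ‖F 0 x‖ ≤ L * (1 + ‖x‖) ^ (ρ + 1) + ‖F 0 0‖ :=
    norm_le_mul_rpow_add_norm_zero hL (hF x)
  inner_sub_smul_id_sub_sq_div_le_inner (f := (F · x)) (hA θ x) growth hε

end Dissipativity

/-- If `F` is jointly Lipschitz and satisfies the convexity condition with
the positive semidefinite matrix (linear map) `Â₁(x)`, then for every `ε > 0`, `θ`, `x`,
`⟨F(θ,x), θ⟩ ≥ ⟨θ, (Â₁(x) − ε I_d) θ⟩ − (L2(1+|x|)^{ρ+1} + |F(0,0)|)²/(4ε)`;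
i.e. `F` is dissipative with `A(x) = Â₁(x) − ε I_d` and
`b(x) = (L2(1+|x|)^{ρ+1} + |F(0,0)|)²/(4ε)`. -/
theorem dissipativity_of_convexity {d m : ℕ} (hd : 1 ≤ d) (hm : 1 ≤ m)
    (F : EuclideanSpace ℝ (Fin d) → EuclideanSpace ℝ (Fin m) → EuclideanSpace ℝ (Fin d))
    (L1 L2 ρ : ℝ) (hL1 : 0 < L1) (hL2 : 0 < L2) (hρ : 0 ≤ ρ)
    (hFLip : ∀ θ θ' x x', ‖F θ x - F θ' x'‖ ≤
      (1 + ‖x‖ + ‖x'‖) ^ ρ * (L1 * ‖θ - θ'‖ + L2 * ‖x - x'‖))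
    (Ahat1 : EuclideanSpace ℝ (Fin m) → (EuclideanSpace ℝ (Fin d) →ₗ[ℝ] EuclideanSpace ℝ (Fin d)))
    (hpsd : ∀ x y, 0 ≤ ⟪y, Ahat1 x y⟫)
    (hconv : ∀ θ θ' x, ⟪θ - θ', Ahat1 x (θ - θ')⟫ ≤ ⟪F θ x - F θ' x, θ - θ'⟫) :
    ∀ ε : ℝ, 0 < ε →
      ∀ (θ : EuclideanSpace ℝ (Fin d)) (x : EuclideanSpace ℝ (Fin m)),
        ⟪θ, (Ahat1 x - ε • (LinearMap.id : EuclideanSpace ℝ (Fin d) →ₗ[ℝ]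
            EuclideanSpace ℝ (Fin d))) θ⟫
          - (L2 * (1 + ‖x‖) ^ (ρ + 1)
              + ‖F (0 : EuclideanSpace ℝ (Fin d)) (0 : EuclideanSpace ℝ (Fin m))‖) ^ 2 / (4 * ε)
        ≤ ⟪F θ x, θ⟫ := by
  intro ε hε
  exact dissipativity_of_convexity_general F hL2.le (fun x => by simpa using hFLip 0 0 x 0) Ahat1
    (fun θ x => by simpa using hconv θ 0 x) hε
end

section
/- Let n ≥ 2 and let w, w̄ ∈ ℝ^n agree in all coordinates except possibly the first. Then for every x ∈ ℝ^n, |ĝ_{w_1}(w, x) − ĝ_{w_1}(w̄, x)| ≤ 2 |w_1 − w̄_1| Σ_{i=1}^n |x_i|, where ĝ_{w_1}(w, x) := Σ_{i=1}^n (∂g_i(w)/∂w_1) x_i is the derivative in w_1 of the softmax-weighted sum Σ_i g_i(w) x_i. -/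
open Real Finset

noncomputable section

/-- `ĝ_{w₁}(w, x) = Σᵢ (∂gᵢ(w)/∂w₁) xᵢ`: the derivative in the first coordinate `w₁` of the
softmax-weighted sum `Σᵢ gᵢ(w) xᵢ`, where `gᵢ(w) = e^{wᵢ}/Σⱼ e^{wⱼ}`, given by the explicit
formulas `∂g₁/∂w₁ = e^{w₁}(Σ_{l≠1} e^{w_l})/(Σ_l e^{w_l})²` and
`∂gᵢ/∂w₁ = −e^{wᵢ}e^{w₁}/(Σ_l e^{w_l})²` for `i ≠ 1`. -/
def ghat (n : ℕ) [NeZero n] (w x : Fin n → ℝ) : ℝ :=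
  (Real.exp (w 0) * (∑ l ∈ Finset.univ.erase 0, Real.exp (w l)) /
      (∑ l, Real.exp (w l)) ^ 2) * x 0
  + ∑ i ∈ Finset.univ.erase 0,
      (-(Real.exp (w i) * Real.exp (w 0)) / (∑ l, Real.exp (w l)) ^ 2) * x i

/-!
Let `g i` be the softmax weights and `m = ∑ i, g i * x i`. The derivative of `m` in the coordinate
`w k` is `g k * (x k - m)`. For `x` the indicator of `k` this gives the derivative of `g k`, so the
second derivative of `m` is `(1 - 2 * g k) * g k * (x k - m)`. As `g k ∈ [0, 1]` and `m` is an
average of the `x i`, that second derivative is bounded in absolute value by `max_i |x i - x k|`,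
and the mean value inequality in the single coordinate `w k` gives the Lipschitz bound.
-/

section SoftmaxMean

variable {ι : Type*} [Fintype ι]

/-- The softmax weights `gᵢ(w)`, over an arbitrary finite index type. -/
def softmax (w : ι → ℝ) (i : ι) : ℝ :=
  exp (w i) / ∑ j, exp (w j)

/-- The softmax-weighted sum `∑ᵢ gᵢ(w) xᵢ`, an average of the values `xᵢ`. -/
def softmaxMean (w x : ι → ℝ) : ℝ :=
  ∑ i, softmax w i * x i

/-- The partial derivative of `softmaxMean w x` in the coordinate `w k`, in closed form; see
`hasDerivAt_softmaxMean_update`. It extends `ghat` to any finite index type and any coordinate. -/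
def softmaxMeanPartial (k : ι) (w x : ι → ℝ) : ℝ :=
  softmax w k * (x k - softmaxMean w x)

theorem softmaxMean_eq_div (w x : ι → ℝ) :
    softmaxMean w x = (∑ i, exp (w i) * x i) / ∑ i, exp (w i) := by
  simp only [softmaxMean, softmax, div_mul_eq_mul_div, sum_div]

theorem softmax_nonneg (w : ι → ℝ) (i : ι) : 0 ≤ softmax w i := by
  unfold softmax
  positivity

theorem sum_exp_pos [Nonempty ι] (w : ι → ℝ) : 0 < ∑ i, exp (w i) :=
  sum_pos (fun i _ => exp_pos (w i)) univ_nonempty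

theorem sum_softmax [Nonempty ι] (w : ι → ℝ) : ∑ i, softmax w i = 1 := by
  simp only [softmax, ← sum_div]
  exact div_self (sum_exp_pos w).ne'

theorem softmax_le_one (w : ι → ℝ) (i : ι) : softmax w i ≤ 1 := by
  have : Nonempty ι := ⟨i⟩
  rw [← sum_softmax w]
  exact single_le_sum (fun j _ => softmax_nonneg w j) (mem_univ i)

theorem softmaxMean_mem_of_convex [Nonempty ι] {s : Set ℝ} (hs : Convex ℝ s) (w : ι → ℝ)
    {x : ι → ℝ} (hx : ∀ i, x i ∈ s) : softmaxMean w x ∈ s :=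
  hs.sum_mem (fun i _ => softmax_nonneg w i) (sum_softmax w) fun i _ => hx i

theorem abs_sub_softmaxMean_le {k : ι} {x : ι → ℝ} {r : ℝ} (hr : ∀ i, |x i - x k| ≤ r)
    (w : ι → ℝ) : |x k - softmaxMean w x| ≤ r := by
  have : Nonempty ι := ⟨k⟩
  rw [abs_sub_comm]
  exact softmaxMean_mem_of_convex (convex_closedBall (x k) r) w hr

theorem hasDerivAt_sum_exp_update_mul [DecidableEq ι] (k : ι) (w x : ι → ℝ) (t : ℝ) :
    HasDerivAt (fun s => ∑ i, exp (Function.update w k s i) * x i) (exp t * x k) t := by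
  have hterm (i : ι) : HasDerivAt (fun s => exp (Function.update w k s i) * x i)
      (exp (Function.update w k t i) * (Pi.single k 1 : ι → ℝ) i * x i) t :=
    (hasDerivAt_pi.mp (hasDerivAt_update w k t) i).exp.mul_const (x i)
  refine (HasDerivAt.fun_sum fun i _ => hterm i).congr_deriv ?_
  rw [Fintype.sum_eq_single k fun i hi => by simp [hi]]
  simp

theorem hasDerivAt_softmaxMean_update [DecidableEq ι] (k : ι) (w x : ι → ℝ) (t : ℝ) :
    HasDerivAt (fun s => softmaxMean (Function.update w k s) x)
      (softmaxMeanPartial k (Function.update w k t) x) t := by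
  have : Nonempty ι := ⟨k⟩
  have hden : HasDerivAt (fun s => ∑ i, exp (Function.update w k s i)) (exp t) t := by
    simpa only [mul_one] using hasDerivAt_sum_exp_update_mul k w (fun _ => 1) t
  have hpos := sum_exp_pos (Function.update w k t)
  simp only [softmaxMean_eq_div]
  refine ((hasDerivAt_sum_exp_update_mul k w x t).fun_div hden hpos.ne').congr_deriv ?_
  rw [softmaxMeanPartial, softmaxMean_eq_div, softmax, Function.update_self]
  field_simp

theorem softmaxMean_single [DecidableEq ι] (k : ι) (w : ι → ℝ) :
    softmaxMean w (Pi.single k 1) = softmax w k := by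
  simp [softmaxMean, Pi.single_apply]

theorem hasDerivAt_softmax_update_self [DecidableEq ι] (k : ι) (w : ι → ℝ) (t : ℝ) :
    HasDerivAt (fun s => softmax (Function.update w k s) k)
      (softmax (Function.update w k t) k * (1 - softmax (Function.update w k t) k)) t := by
  simpa only [softmaxMeanPartial, softmaxMean_single, Pi.single_eq_same] using
    hasDerivAt_softmaxMean_update k w (Pi.single k 1) t

theorem hasDerivAt_softmaxMeanPartial_update [DecidableEq ι] (k : ι) (w x : ι → ℝ) (t : ℝ) :
    HasDerivAt (fun s => softmaxMeanPartial k (Function.update w k s) x)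
      ((1 - 2 * softmax (Function.update w k t) k) *
        softmaxMeanPartial k (Function.update w k t) x) t := by
  refine ((hasDerivAt_softmax_update_self k w t).fun_mul
    ((hasDerivAt_softmaxMean_update k w x t).const_sub (x k))).congr_deriv ?_
  unfold softmaxMeanPartial
  ring

theorem abs_one_sub_two_mul_softmax_le_one (w : ι → ℝ) (k : ι) :
    |1 - 2 * softmax w k| ≤ 1 := by
  rw [abs_le]
  constructor <;> linarith [softmax_nonneg w k, softmax_le_one w k]

theorem abs_softmaxMeanPartial_le {k : ι} {x : ι → ℝ} {r : ℝ} (hr : ∀ i, |x i - x k| ≤ r)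
    (w : ι → ℝ) : |softmaxMeanPartial k w x| ≤ r := by
  rw [softmaxMeanPartial, abs_mul, abs_of_nonneg (softmax_nonneg w k)]
  exact (mul_le_of_le_one_left (abs_nonneg _) (softmax_le_one w k)).trans
    (abs_sub_softmaxMean_le hr w)

theorem abs_softmaxMeanPartial_sub_le {k : ι} {w w' x : ι → ℝ} {r : ℝ}
    (hagree : ∀ i, i ≠ k → w i = w' i) (hr : ∀ i, |x i - x k| ≤ r) :
    |softmaxMeanPartial k w x - softmaxMeanPartial k w' x| ≤ r * |w k - w' k| := by
  classical
  have hbound (t : ℝ) : ‖(1 - 2 * softmax (Function.update w k t) k) *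
      softmaxMeanPartial k (Function.update w k t) x‖ ≤ r := by
    rw [norm_mul]
    exact (mul_le_of_le_one_left (norm_nonneg _) (abs_one_sub_two_mul_softmax_le_one _ k)).trans
      (abs_softmaxMeanPartial_le hr _)
  have hlip := convex_univ.norm_image_sub_le_of_norm_hasDerivWithin_le
    (fun t _ => (hasDerivAt_softmaxMeanPartial_update k w x t).hasDerivWithinAt)
    (fun t _ => hbound t) (Set.mem_univ (w' k)) (Set.mem_univ (w k))
  have hw' : Function.update w k (w' k) = w' :=
    Function.update_eq_iff.mpr ⟨rfl, hagree⟩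
  simpa only [Function.update_eq_self, hw', norm_eq_abs] using hlip

theorem abs_sub_le_sum_abs (x : ι → ℝ) (i j : ι) : |x i - x j| ≤ ∑ l, |x l| := by
  classical
  obtain rfl | hij := eq_or_ne i j
  · simpa only [sub_self, abs_zero] using sum_nonneg fun l _ => abs_nonneg (x l)
  · calc |x i - x j| ≤ |x i| + |x j| := abs_sub _ _
      _ = ∑ l ∈ {i, j}, |x l| := (sum_pair (f := fun l => |x l|) hij).symm
      _ ≤ ∑ l, |x l| := sum_le_univ_sum_of_nonneg fun l => abs_nonneg (x l)

theorem ghat_lipschitz_first_coordinate_general (k : ι) (w wbar x : ι → ℝ)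
    (hagree : ∀ i, i ≠ k → w i = wbar i) :
    |softmaxMeanPartial k w x - softmaxMeanPartial k wbar x| ≤
      |w k - wbar k| * ∑ i, |x i| := by
  rw [mul_comm]
  exact abs_softmaxMeanPartial_sub_le hagree fun i => abs_sub_le_sum_abs x i k

end SoftmaxMean

theorem ghat_eq_softmaxMeanPartial {n : ℕ} [NeZero n] (w x : Fin n → ℝ) :
    ghat n w x = softmaxMeanPartial 0 w x := by
  have hexp := add_sum_erase univ (fun i => exp (w i)) (mem_univ 0)
  have hmean := add_sum_erase univ (fun i => exp (w i) * x i) (mem_univ 0)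
  have htail : ∑ i ∈ univ.erase 0, -(exp (w i) * exp (w 0)) / (∑ l, exp (w l)) ^ 2 * x i =
      -exp (w 0) / (∑ l, exp (w l)) ^ 2 * ∑ i ∈ univ.erase 0, exp (w i) * x i := by
    rw [mul_sum]
    exact sum_congr rfl fun i _ => by ring
  rw [ghat, htail, eq_sub_of_add_eq' hexp, eq_sub_of_add_eq' hmean, softmaxMeanPartial,
    softmaxMean_eq_div, softmax]
  field_simp
  ring

/-- If `w` and `w̄` agree in all coordinates except possibly the first,
then `|ĝ_{w₁}(w, x) − ĝ_{w₁}(w̄, x)| ≤ 2 |w₁ − w̄₁| Σᵢ |xᵢ|`. -/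
theorem ghat_lipschitz_first_coordinate {n : ℕ} [NeZero n] (hn : 2 ≤ n)
    (w wbar x : Fin n → ℝ)
    (hagree : ∀ i : Fin n, i ≠ 0 → w i = wbar i) :
    |ghat n w x - ghat n wbar x| ≤ 2 * |w 0 - wbar 0| * ∑ i, |x i| := by
  calc |ghat n w x - ghat n wbar x|
      ≤ |w 0 - wbar 0| * ∑ i, |x i| := by
        simpa only [ghat_eq_softmaxMeanPartial] using
          ghat_lipschitz_first_coordinate_general 0 w wbar x hagree
    _ ≤ 2 * |w 0 - wbar 0| * ∑ i, |x i| := by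
        gcongr
        exact le_mul_of_one_le_left (abs_nonneg _) one_le_two
end
end

section
/- Consider the θ-component of the CVaR stochastic gradient, H_θ(θ̂, x) := 1 − (1/(1−q̄)) · 1_{{ Σ_{i=1}^n g_i(w) x_i ≥ θ }} + 2γθ for θ̂ = (θ, w). Then for any θ, θ' ∈ ℝ and any fixed w ∈ ℝ^n, E[ |H_θ((θ, w), X) − H_θ((θ', w), X)| ] ≤ ( 2γ + 2n c / (1 − q̄) ) |θ − θ'|, where c is an upper bound on the densities of the X_i. -/
open MeasureTheory ProbabilityTheory Real
open scoped ENNReal NNReal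

/-!
Some weight `aᵢ` of a weighted mean `∑ⱼ aⱼ Xⱼ` is at least `1/n`, so `aᵢ Xᵢ` has a density bounded
by `n c`. Adding the independent remaining terms convolves this law with a probability measure,
which by translation invariance of Lebesgue measure does not increase the bound. Moving the
threshold from `θ` to `θ'` changes the indicator only if the mean lies between them, an event of
probability at most `n c |θ - θ'|`.
-/

theorem withDensity_le_smul {α : Type*} [MeasurableSpace α] {κ : Measure α} {f : α → ℝ≥0∞}
    {C : ℝ≥0∞} (hf : ∀ᵐ x ∂κ, f x ≤ C) :
    κ.withDensity f ≤ C • κ :=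
  withDensity_const (μ := κ) C ▸ withDensity_mono hf

section Convolution

variable {G : Type*} [MeasurableSpace G]

theorem conv_eq_smul_of_isAddLeftInvariant [AddMonoid G] [MeasurableAdd₂ G]
    (ρ κ : Measure G) [SFinite κ] [κ.IsAddLeftInvariant] :
    ρ ∗ κ = ρ Set.univ • κ := by
  ext s hs
  have translate (x : G) : κ ((x, ·) ⁻¹' ((fun p : G × G ↦ p.1 + p.2) ⁻¹' s)) = κ s := by
    rw [← Set.preimage_comp, ← Measure.map_apply (by fun_prop) hs]
    exact congrArg (· s) (map_add_left_eq_self κ x)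
  rw [Measure.conv, Measure.map_apply measurable_add hs,
    Measure.prod_apply (measurable_add hs)]
  simp [translate, mul_comm]

theorem conv_le_smul_of_isAddLeftInvariant [AddMonoid G] [MeasurableAdd₂ G]
    (ρ : Measure G) [IsProbabilityMeasure ρ] {ν κ : Measure G} [SFinite κ]
    [κ.IsAddLeftInvariant] {C : ℝ≥0∞} (hν : ν ≤ C • κ) :
    ρ ∗ ν ≤ C • κ :=
  calc
    ρ ∗ ν ≤ ρ ∗ (C • κ) := Measure.map_mono (Measure.prod_mono le_rfl hν) measurable_add
    _ = C • κ := by simp [conv_eq_smul_of_isAddLeftInvariant]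

variable {Ω : Type*} [MeasurableSpace Ω] {μ : Measure Ω}

theorem map_add_le_smul_of_indepFun [AddMonoid G] [MeasurableAdd₂ G] [IsProbabilityMeasure μ]
    {κ : Measure G} [SFinite κ] [κ.IsAddLeftInvariant] {Y Z : Ω → G}
    (hY : AEMeasurable Y μ) (hZ : AEMeasurable Z μ) (hYZ : IndepFun Y Z μ) {C : ℝ≥0∞}
    (h : μ.map Z ≤ C • κ) :
    μ.map (Y + Z) ≤ C • κ := by
  have := Measure.isProbabilityMeasure_map hY
  rw [hYZ.map_add_eq_map_conv_map₀ hY hZ]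
  exact conv_le_smul_of_isAddLeftInvariant _ h

theorem map_sum_le_smul_of_iIndepFun {ι : Type*} [AddCommMonoid G] [MeasurableAdd₂ G]
    {κ : Measure G} [SFinite κ] [κ.IsAddLeftInvariant] {X : ι → Ω → G}
    (hX : ∀ i, AEMeasurable (X i) μ) (hindep : iIndepFun X μ) {s : Finset ι} {i : ι} (hi : i ∈ s)
    {C : ℝ≥0∞} (h : μ.map (X i) ≤ C • κ) :
    μ.map (∑ j ∈ s, X j) ≤ C • κ := by
  classical
  have := hindep.isProbabilityMeasure
  rw [← Finset.sum_erase_add s X hi]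
  exact map_add_le_smul_of_indepFun (Finset.aemeasurable_sum _ fun j _ ↦ hX j) (hX i)
    (hindep.indepFun_finsetSum_of_notMem₀ hX (Finset.notMem_erase i s)) h

end Convolution

section WeightedMean

theorem exists_inv_card_le_of_sum_eq_one {ι : Type*} [Fintype ι] {a : ι → ℝ}
    (ha : ∑ i, a i = 1) :
    ∃ i, (Fintype.card ι : ℝ)⁻¹ ≤ a i := by
  have hne : (Finset.univ : Finset ι).Nonempty :=
    Finset.nonempty_of_sum_ne_zero (ha ▸ one_ne_zero)
  have : Nonempty ι := Finset.univ_nonempty_iff.mp hne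
  obtain ⟨i, -, hi⟩ := Finset.exists_le_of_sum_le hne
    (f := fun _ ↦ (Fintype.card ι : ℝ)⁻¹) (g := a) (by simp [ha])
  exact ⟨i, hi⟩

theorem sum_exp_div_sum_exp {ι : Type*} [Fintype ι] [Nonempty ι] (w : ι → ℝ) :
    ∑ i, exp (w i) / ∑ j, exp (w j) = 1 := by
  rw [← Finset.sum_div]
  exact div_self (Finset.sum_pos (fun i _ ↦ exp_pos (w i)) Finset.univ_nonempty).ne'

variable {Ω : Type*} [MeasurableSpace Ω] {μ : Measure Ω} {C : ℝ≥0∞}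

theorem map_const_mul_le_smul_volume {Y : Ω → ℝ} (hY : AEMeasurable Y μ)
    (h : μ.map Y ≤ C • volume) {r : ℝ} (hr : r ≠ 0) :
    μ.map (fun ω ↦ r * Y ω) ≤ (C * ENNReal.ofReal |r⁻¹|) • volume :=
  calc
    μ.map (fun ω ↦ r * Y ω) = (μ.map Y).map (r * ·) :=
      (AEMeasurable.map_map_of_aemeasurable (by fun_prop) hY).symm
    _ ≤ (C • volume).map (r * ·) := Measure.map_mono h (by fun_prop)
    _ = (C * ENNReal.ofReal |r⁻¹|) • volume := by
      rw [Measure.map_smul, Real.map_volume_mul_left hr, smul_smul]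

theorem map_weighted_mean_le_smul_volume {ι : Type*} [Fintype ι] {X : ι → Ω → ℝ}
    (hX : ∀ i, AEMeasurable (X i) μ) (hindep : iIndepFun X μ)
    (hdens : ∀ i, μ.map (X i) ≤ C • volume) {a : ι → ℝ} (ha : ∑ i, a i = 1) :
    μ.map (fun ω ↦ ∑ i, a i * X i ω) ≤ (Fintype.card ι * C) • volume := by
  obtain ⟨i, hi⟩ := exists_inv_card_le_of_sum_eq_one ha
  have card_pos : (0 : ℝ) < Fintype.card ι := by
    exact_mod_cast Fintype.card_pos_iff.mpr ⟨i⟩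
  have a_pos : 0 < a i := (inv_pos.mpr card_pos).trans_le hi
  have inv_le : ENNReal.ofReal |(a i)⁻¹| ≤ Fintype.card ι := by
    rw [abs_of_pos (inv_pos.mpr a_pos)]
    exact ENNReal.ofReal_le_of_le_toReal (by simpa using inv_le_of_inv_le₀ card_pos hi)
  have term_le : μ.map (fun ω ↦ a i * X i ω) ≤ (Fintype.card ι * C) • volume :=
    (map_const_mul_le_smul_volume (hX i) (hdens i) a_pos.ne').trans <| by
      rw [mul_comm C]; gcongr
  have hindep' : iIndepFun (fun j ω ↦ a j * X j ω) μ :=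
    hindep.comp (fun j x ↦ a j * x) fun j ↦ by fun_prop
  simpa only [Finset.sum_fn] using map_sum_le_smul_of_iIndepFun
    (fun j ↦ (hX j).const_mul (a j)) hindep' (Finset.mem_univ i) term_le

end WeightedMean

section Gradient

theorem abs_indicator_Ici_sub_indicator_Ici {α : Type*} [LinearOrder α] (θ θ' s : α) :
    |(Set.Ici θ).indicator (1 : α → ℝ) s - (Set.Ici θ').indicator 1 s| =
      (Set.Ico (min θ θ') (max θ θ')).indicator 1 s := by
  by_cases h : θ ≤ s <;> by_cases h' : θ' ≤ s <;> simp [Set.indicator, h, h', ← not_le]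

/-- The `θ`-component of the CVaR stochastic gradient at confidence level `q` with quadratic
regularization `γ θ ^ 2`, as a function of the aggregate `s = ∑ᵢ gᵢ(w) xᵢ`: the weights and the
sample enter only through `s`. -/
noncomputable def cvarGradient (q γ θ s : ℝ) : ℝ :=
  1 - (1 / (1 - q)) * (Set.Ici θ).indicator 1 s + 2 * γ * θ

theorem measurable_cvarGradient (q γ θ : ℝ) : Measurable (cvarGradient q γ θ) :=
  (((measurable_one.indicator measurableSet_Ici).const_mul _).const_sub 1).add_const _

variable {q γ : ℝ}

theorem abs_cvarGradient_sub_le (hq : q < 1) (hγ : 0 ≤ γ) (θ θ' s : ℝ) :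
    |cvarGradient q γ θ s - cvarGradient q γ θ' s| ≤
      1 / (1 - q) * (Set.Ico (min θ θ') (max θ θ')).indicator 1 s + 2 * γ * |θ - θ'| := by
  have hq' : 0 ≤ 1 / (1 - q) := one_div_nonneg.mpr (sub_nonneg.mpr hq.le)
  let I (t : ℝ) : ℝ := (Set.Ici t).indicator 1 s
  calc
    |cvarGradient q γ θ s - cvarGradient q γ θ' s|
      = |2 * γ * (θ - θ') - 1 / (1 - q) * (I θ - I θ')| := by
        unfold cvarGradient
        congr 1
        ring
    _ ≤ |2 * γ * (θ - θ')| + |1 / (1 - q) * (I θ - I θ')| := abs_sub _ _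
    _ = 1 / (1 - q) * (Set.Ico (min θ θ') (max θ θ')).indicator 1 s + 2 * γ * |θ - θ'| := by
      rw [abs_mul, abs_mul (1 / (1 - q)), abs_of_nonneg hq', abs_of_nonneg (by positivity),
        abs_indicator_Ici_sub_indicator_Ici, add_comm]

theorem measureReal_Ico_min_max_le {ν : Measure ℝ} {C : ℝ≥0} (hν : ν ≤ (C : ℝ≥0∞) • volume)
    (θ θ' : ℝ) :
    ν.real (Set.Ico (min θ θ') (max θ θ')) ≤ C * |θ - θ'| := by
  refine ENNReal.toReal_le_of_le_ofReal (by positivity) ((hν _).trans_eq ?_)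
  rw [Measure.smul_apply, Real.volume_Ico, max_sub_min_eq_abs', smul_eq_mul,
    ENNReal.ofReal_mul C.coe_nonneg, ENNReal.ofReal_coe_nnreal]

theorem integral_abs_cvarGradient_sub_le (hq : q < 1) (hγ : 0 ≤ γ) {ν : Measure ℝ}
    [IsProbabilityMeasure ν] {C : ℝ≥0} (hν : ν ≤ (C : ℝ≥0∞) • volume) (θ θ' : ℝ) :
    ∫ s, |cvarGradient q γ θ s - cvarGradient q γ θ' s| ∂ν ≤
      (2 * γ + C / (1 - q)) * |θ - θ'| := by
  have : 0 < 1 - q := sub_pos.mpr hq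
  set J := Set.Ico (min θ θ') (max θ θ')
  have hJ : Integrable (fun s ↦ 1 / (1 - q) * J.indicator (1 : ℝ → ℝ) s) ν :=
    ((integrable_const (1 : ℝ)).indicator measurableSet_Ico).const_mul _
  calc
    ∫ s, |cvarGradient q γ θ s - cvarGradient q γ θ' s| ∂ν
      ≤ ∫ s, (1 / (1 - q) * J.indicator 1 s + 2 * γ * |θ - θ'|) ∂ν :=
        integral_mono_of_nonneg (.of_forall fun _ ↦ abs_nonneg _)
          (hJ.add (integrable_const _)) (.of_forall (abs_cvarGradient_sub_le hq hγ θ θ'))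
    _ = 1 / (1 - q) * ν.real J + 2 * γ * |θ - θ'| := by
      rw [integral_add hJ (integrable_const _), integral_const_mul,
        integral_indicator_one measurableSet_Ico, integral_const, probReal_univ, one_smul]
    _ ≤ 1 / (1 - q) * (C * |θ - θ'|) + 2 * γ * |θ - θ'| := by
      gcongr
      exact measureReal_Ico_min_max_le hν θ θ'
    _ = (2 * γ + C / (1 - q)) * |θ - θ'| := by ring

theorem cvar_gradient_conditional_lipschitz_general {ι Ω : Type*} [Fintype ι] [MeasurableSpace Ω]
    {μ : Measure Ω} (hq : q < 1) (hγ : 0 ≤ γ) {c : ℝ≥0} {X : ι → Ω → ℝ}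
    (hX : ∀ i, AEMeasurable (X i) μ) (hindep : iIndepFun X μ)
    (hdens : ∀ i, μ.map (X i) ≤ (c : ℝ≥0∞) • volume)
    {a : ι → ℝ} (ha : ∑ i, a i = 1) (θ θ' : ℝ) :
    ∫ ω, |cvarGradient q γ θ (∑ i, a i * X i ω) - cvarGradient q γ θ' (∑ i, a i * X i ω)| ∂μ ≤
      (2 * γ + Fintype.card ι * c / (1 - q)) * |θ - θ'| := by
  have := hindep.isProbabilityMeasure
  have hmean : AEMeasurable (fun ω ↦ ∑ i, a i * X i ω) μ := by fun_prop
  have := Measure.isProbabilityMeasure_map hmean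
  have hloss : Measurable fun s ↦ |cvarGradient q γ θ s - cvarGradient q γ θ' s| :=
    ((measurable_cvarGradient q γ θ).sub (measurable_cvarGradient q γ θ')).abs
  have hlaw : μ.map (fun ω ↦ ∑ i, a i * X i ω) ≤
      ((Fintype.card ι * c : ℝ≥0) : ℝ≥0∞) • volume := by
    simpa using map_weighted_mean_le_smul_volume hX hindep hdens ha
  rw [← integral_map hmean hloss.aestronglyMeasurable]
  simpa using integral_abs_cvarGradient_sub_le hq hγ hlaw θ θ'

end Gradient

/-- Conditional-Lipschitz property in `θ` of the θ-component of the CVaR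
stochastic gradient `H_θ((θ,w), x) = 1 − (1/(1−q̄)) 1_{Σᵢ gᵢ(w) xᵢ ≥ θ} + 2γθ`, where the
`Xᵢ` are i.i.d. with densities bounded by `c` and `gᵢ(w)` are the softmax weights:
`E[|H_θ((θ,w),X) − H_θ((θ',w),X)|] ≤ (2γ + 2nc/(1−q̄)) |θ−θ'|`. -/
theorem cvar_gradient_conditional_lipschitz {n : ℕ} (hn : 1 ≤ n)
    {Ω : Type} [MeasurableSpace Ω] (μ : Measure Ω) [IsProbabilityMeasure μ]
    (q γ c : ℝ) (hq0 : 0 < q) (hq1 : q < 1) (hγ : 0 < γ) (hc : 0 ≤ c)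
    (X : Fin n → Ω → ℝ) (hXmeas : ∀ i, Measurable (X i))
    (hXindep : iIndepFun X μ)
    (hXid : ∀ i j, Measure.map (X i) μ = Measure.map (X j) μ)
    (hdens : ∀ i, ∃ f : ℝ → ℝ, (∀ t, 0 ≤ f t ∧ f t ≤ c) ∧
      Measure.map (X i) μ = volume.withDensity (fun t => ENNReal.ofReal (f t)))
    (g : (Fin n → ℝ) → Fin n → ℝ)
    (hg : ∀ w i, g w i = Real.exp (w i) / ∑ j, Real.exp (w j))
    (Hθ : ℝ → (Fin n → ℝ) → (Fin n → ℝ) → ℝ)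
    (hHθ : ∀ θ w x, Hθ θ w x =
      1 - (1 / (1 - q)) * Set.indicator {y : ℝ | θ ≤ y} (1 : ℝ → ℝ) (∑ i, g w i * x i)
        + 2 * γ * θ) :
    ∀ (θ θ' : ℝ) (w : Fin n → ℝ),
      ∫ ω, |Hθ θ w (fun i => X i ω) - Hθ θ' w (fun i => X i ω)| ∂μ ≤
        (2 * γ + 2 * n * c / (1 - q)) * |θ - θ'| := by
  intro θ θ' w
  lift c to ℝ≥0 using hc
  have : NeZero n := ⟨by lia⟩
  have hlaw (i : Fin n) : μ.map (X i) ≤ (c : ℝ≥0∞) • volume := by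
    obtain ⟨f, hf, hfX⟩ := hdens i
    exact hfX ▸ withDensity_le_smul
      (.of_forall fun t ↦ ENNReal.ofReal_le_of_le_toReal (hf t).2)
  have hsum : ∑ i, g w i = 1 := by simpa only [hg] using sum_exp_div_sum_exp w
  have hgrad (θ w x) : Hθ θ w x = cvarGradient q γ θ (∑ i, g w i * x i) := hHθ θ w x
  calc
    ∫ ω, |Hθ θ w (fun i => X i ω) - Hθ θ' w (fun i => X i ω)| ∂μ
      ≤ (2 * γ + n * c / (1 - q)) * |θ - θ'| := by
        simpa only [hgrad, Fintype.card_fin] using cvar_gradient_conditional_lipschitz_general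
          hq1 hγ.le (fun i ↦ (hXmeas i).aemeasurable) hXindep hlaw hsum θ θ'
    _ ≤ (2 * γ + 2 * n * c / (1 - q)) * |θ - θ'| := by
      have : 0 < 1 - q := sub_pos.mpr hq1
      gcongr
      linarith [n.cast_nonneg (α := ℝ)]
end
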